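/- arXiv:1505.00283 — 7 statements merged into one kernel-verified Lean document; each statement's English description precedes it below -/
import Mathlib

section
/- Let d ≥ 2 and let v : Fin n → ZMod d be a nonzero vector. Then there exist a matrix M : Matrix (Fin n) (Fin n) (ZMod d) that is a finite product of elementary matrices (transvection matrices, i.e. identity plus a single off-diagonal scalar entry, and permutation matrices of transpositions) and a nonzero scalar a ∈ ZMod d such that the row vector v multiplied by M (Matrix.vecMul v M) equals the vector that is a in the first coordinate and 0 in all other coordinates. -/
open Matrix

/-- A matrix is elementary if it is a transvection matrix (identity plus a single
off-diagonal entry) or the permutation matrix of a transposition. -/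
def IsElementary {n : ℕ} {R : Type*} [CommRing R] (M : Matrix (Fin n) (Fin n) R) : Prop :=
  (∃ t : Matrix.TransvectionStruct (Fin n) R, M = t.toMatrix) ∨
  (∃ i j : Fin n, i ≠ j ∧ M = (Equiv.swap i j).permMatrix R)

lemma vecMul_transvection_aux {n : ℕ} {R : Type*} [CommRing R] (v : Fin n → R) (i j : Fin n)
    (c : R) : Matrix.vecMul v (Matrix.transvection i j c) =
      Function.update v j (v j + c * v i) := by
  ext k
  rw [Matrix.transvection, Matrix.vecMul_add, Matrix.vecMul_one, Pi.add_apply]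
  by_cases hk : k = j
  · subst hk
    simp [Matrix.vecMul, dotProduct, Matrix.single_apply, mul_comm]
  · have hk' : j ≠ k := fun h => hk h.symm
    simp [Matrix.vecMul, dotProduct, Matrix.single_apply, hk, hk']

lemma reduction_aux (d n : ℕ) [NeZero d] : ∀ (s : ℕ) (v : Fin n → ZMod d), v ≠ 0 →
    (∑ i, (v i).val) = s →
    ∃ (L : List (Matrix (Fin n) (Fin n) (ZMod d))),
      (∀ M ∈ L, IsElementary M) ∧
      ∃ a : ZMod d, a ≠ 0 ∧
        Matrix.vecMul v L.prod = fun i : Fin n => if (i : ℕ) = 0 then a else 0 := by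
  intro s
  induction s using Nat.strong_induction_on with
  | _ s ih =>
  intro v hv hs
  by_cases h : ∃ i j, i ≠ j ∧ v i ≠ 0 ∧ v j ≠ 0 ∧ (v i).val ≤ (v j).val
  · obtain ⟨i, j, hij, hi, hj, hle⟩ := h
    let w := Function.update v j (v j + (-1) * v i)
    have hwi : w i = v i := Function.update_of_ne hij _ _
    have hw : w ≠ 0 := fun h0 => hi (by rw [← hwi, h0]; rfl)
    have hlt : ∑ k, (w k).val < s := by
      rw [← hs]
      have hjlt : (w j).val < (v j).val := by
        have : w j = v j - v i := by simp [w, sub_eq_add_neg]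
        rw [this, ZMod.val_sub hle]
        have : 0 < (v i).val := ZMod.val_pos.mpr hi
        omega
      refine Finset.sum_lt_sum (fun k _ => ?_) ⟨j, Finset.mem_univ _, hjlt⟩
      by_cases hk : k = j
      · subst hk; exact hjlt.le
      · simp [w, hk]
    obtain ⟨L, hL, a, ha, hLa⟩ := ih _ hlt w hw rfl
    refine ⟨Matrix.transvection i j (-1) :: L, ?_, a, ha, ?_⟩
    · intro M hM
      rcases List.mem_cons.mp hM with rfl | hM
      · exact Or.inl ⟨⟨i, j, hij, -1⟩, rfl⟩
      · exact hL M hM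
    · rw [List.prod_cons, ← Matrix.vecMul_vecMul, vecMul_transvection_aux]
      exact hLa
  · obtain ⟨i, hi⟩ := Function.ne_iff.mp hv
    have hz : ∀ j, j ≠ i → v j = 0 := by
      intro j hj
      by_contra hj0
      rcases le_total (v i).val (v j).val with hl | hl
      · exact h ⟨i, j, hj.symm, hi, hj0, hl⟩
      · exact h ⟨j, i, hj, hj0, hi, hl⟩
    by_cases hi0 : (i : ℕ) = 0
    · refine ⟨[], by simp, v i, hi, ?_⟩
      ext k
      by_cases hk : k = i
      · subst hk; simp [hi0]
      · have : (k : ℕ) ≠ 0 := fun h0 => hk (Fin.ext (h0.trans hi0.symm))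
        simp [hz k hk, this]
    · have hn : 0 < n := i.pos
      let z : Fin n := ⟨0, hn⟩
      have hzi : z ≠ i := fun h0 => hi0 (by rw [← h0])
      refine ⟨[(Equiv.swap z i).permMatrix (ZMod d)], ?_, v i, hi, ?_⟩
      · intro M hM
        rw [List.mem_singleton] at hM
        exact Or.inr ⟨z, i, hzi, hM⟩
      · ext k
        rw [List.prod_singleton, Matrix.vecMul_permMatrix, Function.comp_apply, Equiv.symm_swap]
        by_cases hk : k = z
        · subst hk; simp [z]
        · have hk0 : (k : ℕ) ≠ 0 := fun h0 => hk (Fin.ext h0)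
          rw [if_neg hk0]
          apply hz
          intro h0
          apply hk
          rw [Equiv.swap_apply_eq_iff] at h0
          simpa using h0

theorem vec_elementary_reduction (d n : ℕ) (hd : 2 ≤ d)
    (v : Fin n → ZMod d) (hv : v ≠ 0) :
    ∃ (L : List (Matrix (Fin n) (Fin n) (ZMod d))),
      (∀ M ∈ L, IsElementary M) ∧
      ∃ a : ZMod d, a ≠ 0 ∧
        Matrix.vecMul v L.prod = fun i : Fin n => if (i : ℕ) = 0 then a else 0 := by
  haveI : NeZero d := ⟨by omega⟩
  exact reduction_aux d n _ v hv rfl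
end

section
/- Let d ≥ 2 and let T : Matrix (Fin m) (Fin k) (ZMod d). Then the cardinality of the ZMod d-submodule of (Fin k → ZMod d) spanned by the rows of T equals the cardinality of the image of T as a linear map, i.e. Nat.card (Submodule.span (ZMod d) (set of rows of T)) = Nat.card (LinearMap.range T.mulVecLin). -/
theorem card_vecMul_le_aux (d m k : ℕ) [NeZero d] (T : Matrix (Fin m) (Fin k) (ZMod d)) :
    Nat.card (LinearMap.range T.vecMulLinear) ≤ Nat.card (LinearMap.range T.mulVecLin) := by
  classical
  have : Fintype (LinearMap.range T.mulVecLin) := Fintype.ofFinite _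
  have hc : Nat.card (AddChar (LinearMap.range T.mulVecLin) ℂ)
      = Nat.card (LinearMap.range T.mulVecLin) := by
    rw [Nat.card_eq_fintype_card, Nat.card_eq_fintype_card, AddChar.card_eq]
  rw [← hc]
  choose y hy using fun r : LinearMap.range T.vecMulLinear => r.2
  let f : (Fin m → ZMod d) → (LinearMap.range T.mulVecLin →+ ZMod d) := fun y =>
    { toFun := fun c => y ⬝ᵥ c.1
      map_zero' := by simp
      map_add' := by intro a b; simp [dotProduct_add] }
  apply Nat.card_le_card_of_injective
    (fun r => (ZMod.stdAddChar (N := d)).compAddMonoidHom (f (y r)))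
  intro r s h
  apply Subtype.ext
  rw [← hy r, ← hy s]
  funext j
  have h1 := DFunLike.congr_fun h ⟨T.mulVecLin (Pi.single j 1), ⟨_, rfl⟩⟩
  have h2 := ZMod.injective_stdAddChar (N := d) h1
  change y r ⬝ᵥ T.mulVec (Pi.single j 1) = y s ⬝ᵥ T.mulVec (Pi.single j 1) at h2
  rw [Matrix.dotProduct_mulVec, Matrix.dotProduct_mulVec] at h2
  simpa using h2

theorem card_row_module_eq_card_range (d m k : ℕ) (hd : 2 ≤ d)
    (T : Matrix (Fin m) (Fin k) (ZMod d)) :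
    Nat.card (Submodule.span (ZMod d) (Set.range fun i : Fin m => T i)) =
      Nat.card (LinearMap.range T.mulVecLin) := by
  have : NeZero d := ⟨by omega⟩
  have e : Submodule.span (ZMod d) (Set.range fun i : Fin m => T i)
      = LinearMap.range T.vecMulLinear := (range_vecMulLinear T).symm
  rw [e]
  apply le_antisymm (card_vecMul_le_aux d m k T)
  have h := card_vecMul_le_aux d k m T.transpose
  have e1 : T.transpose.vecMulLinear = T.mulVecLin := by
    ext1; simp
  have e2 : T.transpose.mulVecLin = T.vecMulLinear := by
    ext1; simp
  rwa [e1, e2] at h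
end

section
/- Let S be an abelian subgroup of the Pauli group G_d^n with no nontrivial scalars. Then Nat.card S ≤ d^n. -/
open Matrix

noncomputable def q (d : ℕ) : ℂ := Complex.exp (2 * Real.pi * Complex.I / d)

/-- Dot product of two vectors over `ZMod d`. -/
def dotp {n d : ℕ} (A B : Fin n → ZMod d) : ZMod d := ∑ i, A i * B i

/-- The Pauli word `W(U,V)` with entries `q^{⟨U,J⟩}` at `(J, K)` when `J = K + V`. -/
noncomputable def PauliWord (d n : ℕ) (U V : Fin n → ZMod d) :
    Matrix (Fin n → ZMod d) (Fin n → ZMod d) ℂ :=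
  Matrix.of fun J K => if J = K + V then q d ^ (dotp U J).val else 0

/-- The n-qudit Pauli group, as a set of matrices. -/
noncomputable def PauliSet (d n : ℕ) : Set (Matrix (Fin n → ZMod d) (Fin n → ZMod d) ℂ) :=
  {g | ∃ (k : ZMod d) (U V : Fin n → ZMod d), g = q d ^ k.val • PauliWord d n U V}

theorem q_prim (d : ℕ) [NeZero d] : IsPrimitiveRoot (q d) d :=
  Complex.isPrimitiveRoot_exp d (NeZero.ne d)

theorem q_pow_add (d : ℕ) [NeZero d] (a b : ZMod d) :
    q d ^ (a + b).val = q d ^ a.val * q d ^ b.val := by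
  rw [← pow_add, ZMod.val_add]
  exact (pow_eq_pow_mod _ (q_prim d).pow_eq_one).symm

theorem q_pow_eq_one (d : ℕ) [NeZero d] (a : ZMod d) (h : q d ^ a.val = 1) : a = 0 := by
  have h1 := (q_prim d).dvd_of_pow_eq_one _ h
  have h2 := Nat.eq_zero_of_dvd_of_lt h1 (ZMod.val_lt a)
  exact (ZMod.val_eq_zero a).1 h2

theorem pauliWord_zero (d n : ℕ) [NeZero d] : PauliWord d n 0 0 = 1 := by
  ext J K
  simp [PauliWord, dotp, Matrix.one_apply]

theorem trace_pauliWord (d n : ℕ) [NeZero d] (U V : Fin n → ZMod d) (h : ¬ (U = 0 ∧ V = 0)) :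
    (PauliWord d n U V).trace = 0 := by
  by_cases hV : V = 0
  · have hU : U ≠ 0 := fun hU => h ⟨hU, hV⟩
    obtain ⟨i, hi⟩ := Function.ne_iff.1 hU
    subst hV
    have e : (PauliWord d n U 0).trace = ∑ J : Fin n → ZMod d, q d ^ (dotp U J).val := by
      simp [Matrix.trace, PauliWord]
    rw [e]
    have key : ∑ J : Fin n → ZMod d, q d ^ (dotp U J).val
        = (∑ J : Fin n → ZMod d, q d ^ (dotp U J).val) * q d ^ (U i).val := by
      rw [Finset.sum_mul,
        ← Equiv.sum_comp (Equiv.addRight (Pi.single i (1 : ZMod d) : Fin n → ZMod d))]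
      refine Finset.sum_congr rfl fun J _ => ?_
      rw [← q_pow_add]
      congr 2
      simp [dotp, mul_add, Finset.sum_add_distrib, Pi.single_apply]
    by_contra hne
    exact hi (q_pow_eq_one d _ (mul_left_cancel₀ hne (by rw [mul_one]; exact key.symm)))
  · simp [Matrix.trace, PauliWord, hV]

theorem card_bound {m : Type*} [Fintype m] [DecidableEq m] [Nonempty m]
    (S : Set (Matrix m m ℂ))
    (hS1 : (1 : Matrix m m ℂ) ∈ S)
    (hSmul : ∀ a ∈ S, ∀ b ∈ S, a * b ∈ S)
    (hSinv : ∀ a ∈ S, ∃ b ∈ S, a * b = 1)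
    (htr : ∀ a ∈ S, a ≠ 1 → a.trace = 0) :
    Nat.card S ≤ Fintype.card m := by
  classical
  rcases finite_or_infinite S with hf | hf
  swap
  · simp
  have := Fintype.ofFinite S
  have hN : (Fintype.card S : ℂ) ≠ 0 := by
    have : Nonempty S := ⟨⟨1, hS1⟩⟩
    exact_mod_cast Fintype.card_ne_zero
  rw [Nat.card_eq_fintype_card]
  set T : Matrix m m ℂ := ∑ s : S, (s : Matrix m m ℂ) with hT
  have hl : ∀ s : S, (s : Matrix m m ℂ) * T = T := by
    intro s
    let f : S → S := fun t => ⟨s * t, hSmul _ s.2 _ t.2⟩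
    have hinj : Function.Injective f := by
      intro t u htu
      obtain ⟨b, -, hb⟩ := hSinv s s.2
      have hb' := mul_eq_one_comm.1 hb
      have h1 : (s : Matrix m m ℂ) * t = s * u := congrArg Subtype.val htu
      apply Subtype.ext
      calc (t : Matrix m m ℂ) = b * (s * t) := by rw [← mul_assoc, hb', one_mul]
        _ = b * (s * u) := by rw [h1]
        _ = u := by rw [← mul_assoc, hb', one_mul]
    have hbij := Finite.injective_iff_bijective.1 hinj
    rw [hT, Finset.mul_sum]
    exact hbij.sum_comp (fun t : S => (t : Matrix m m ℂ))
  have hTT : T * T = (Fintype.card S : ℂ) • T := by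
    conv_lhs => rw [hT, Finset.sum_mul, ← hT]
    rw [Finset.sum_congr rfl fun s _ => hl s]
    simp [Nat.cast_smul_eq_nsmul]
  have htrT : T.trace = Fintype.card m := by
    rw [hT, Matrix.trace_sum, Finset.sum_eq_single ⟨1, hS1⟩]
    · simp
    · intro b _ hb
      exact htr b b.2 fun h => hb (Subtype.ext h)
    · simp
  have hP : IsIdempotentElem (Matrix.toLin' ((Fintype.card S : ℂ)⁻¹ • T)) := by
    unfold IsIdempotentElem
    rw [Module.End.mul_eq_comp, ← Matrix.toLin'_mul]
    congr 1
    rw [Matrix.smul_mul, Matrix.mul_smul, hTT, inv_smul_smul₀ hN]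
  have ht := (LinearMap.IsIdempotentElem.isProj_range _ hP).trace
  rw [Matrix.trace_toLin'_eq, Matrix.trace_smul, htrT, smul_eq_mul, inv_mul_eq_iff_eq_mul₀ hN] at ht
  norm_cast at ht
  exact Nat.le_of_dvd Fintype.card_pos ⟨_, ht⟩

theorem card_abelian_pauli_subgroup_le (d n : ℕ) [NeZero d] (hd : 2 ≤ d) (hn : 1 ≤ n)
    (S : Set (Matrix (Fin n → ZMod d) (Fin n → ZMod d) ℂ))
    (hSsub : S ⊆ PauliSet d n)
    (hS1 : (1 : Matrix (Fin n → ZMod d) (Fin n → ZMod d) ℂ) ∈ S)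
    (hSmul : ∀ a ∈ S, ∀ b ∈ S, a * b ∈ S)
    (hSinv : ∀ a ∈ S, ∃ b ∈ S, a * b = 1)
    (hScomm : ∀ a ∈ S, ∀ b ∈ S, a * b = b * a)
    (hSscal : ∀ c : ℂ, c • (1 : Matrix (Fin n → ZMod d) (Fin n → ZMod d) ℂ) ∈ S →
      c • (1 : Matrix (Fin n → ZMod d) (Fin n → ZMod d) ℂ) = 1) :
    Nat.card S ≤ d ^ n := by
  have h := card_bound S hS1 hSmul hSinv ?_
  · simpa [ZMod.card] using h
  · intro a ha hne
    obtain ⟨k, U, V, rfl⟩ := hSsub ha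
    rw [Matrix.trace_smul, trace_pauliWord, smul_zero]
    rintro ⟨rfl, rfl⟩
    rw [pauliWord_zero] at ha hne
    exact hne (hSscal _ ha)
end

section
/- Let S be an abelian subgroup of the Pauli group G_d^n with no nontrivial scalars, and suppose Nat.card S < d^n. Then there exists P ∈ G_d^n with P ∉ S such that the subgroup of G_d^n generated by S ∪ {P} is abelian and has no nontrivial scalars. -/
open Matrix

lemma q_pow_val (d : ℕ) [NeZero d] (x : ZMod d) : q d ^ x.val = ZMod.stdAddChar x := by
  rw [ZMod.stdAddChar_apply, ZMod.toCircle_apply, q, ← Complex.exp_nat_mul]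
  congr 1
  ring

lemma dotp_add_right' {n d : ℕ} (A B C : Fin n → ZMod d) :
    dotp A (B + C) = dotp A B + dotp A C := by
  simp [dotp, mul_add, Finset.sum_add_distrib]

lemma dotp_add_left' {n d : ℕ} (A B C : Fin n → ZMod d) :
    dotp (A + B) C = dotp A C + dotp B C := by
  simp [dotp, add_mul, Finset.sum_add_distrib]

lemma dotp_zero_right' {n d : ℕ} (A : Fin n → ZMod d) : dotp A 0 = 0 := by
  simp [dotp]

lemma dotp_zero_left' {n d : ℕ} (A : Fin n → ZMod d) : dotp 0 A = 0 := by
  simp [dotp]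

/-- Matrices supported exactly on the translate by `V`. -/
def Supp {d n : ℕ} (s : Matrix (Fin n → ZMod d) (Fin n → ZMod d) ℂ) (V : Fin n → ZMod d) : Prop :=
  ∀ J K, s J K ≠ 0 ↔ J = K + V

lemma supp_mul {d n : ℕ} [NeZero d] {s t : Matrix (Fin n → ZMod d) (Fin n → ZMod d) ℂ}
    {V V' : Fin n → ZMod d} (hs : Supp s V) (ht : Supp t V') : Supp (s * t) (V + V') := by
  intro J K
  have h : (s * t) J K = s J (K + V') * t (K + V') K := by
    rw [Matrix.mul_apply]
    apply Finset.sum_eq_single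
    · intro b _ hb
      have : t b K = 0 := by
        by_contra h
        exact hb ((ht b K).1 h)
      simp [this]
    · simp
  rw [h]
  have h2 := (ht (K + V') K).2 rfl
  have h3 := hs J (K + V')
  rw [mul_ne_zero_iff, h3]
  constructor
  · rintro ⟨h, -⟩
    rw [h]; abel
  · intro h
    refine ⟨?_, h2⟩
    rw [h]; abel

lemma supp_unique {d n : ℕ} [NeZero d] {s : Matrix (Fin n → ZMod d) (Fin n → ZMod d) ℂ}
    {V V' : Fin n → ZMod d} (hs : Supp s V) (ht : Supp s V') : V = V' := by
  have h1 := (hs (0 + V) 0).2 rfl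
  simpa using (ht _ _).1 h1

lemma supp_one {d n : ℕ} [NeZero d] :
    Supp (1 : Matrix (Fin n → ZMod d) (Fin n → ZMod d) ℂ) 0 := by
  intro J K
  simp [Matrix.one_apply]

lemma supp_pauli {d n : ℕ} [NeZero d] {g : Matrix (Fin n → ZMod d) (Fin n → ZMod d) ℂ}
    (hg : g ∈ PauliSet d n) : ∃ V, Supp g V := by
  obtain ⟨k, U, V, rfl⟩ := hg
  have hq : q d ≠ 0 := Complex.exp_ne_zero _
  refine ⟨V, fun J K => ?_⟩
  simp [PauliWord, hq]

lemma pauli_diag {d n : ℕ} [NeZero d] (U : Fin n → ZMod d) :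
    PauliWord d n U 0 = Matrix.diagonal fun J => ZMod.stdAddChar (dotp U J) := by
  ext J K
  simp only [PauliWord, Matrix.of_apply, q_pow_val, add_zero, Matrix.diagonal_apply]

lemma pauli_comm {d n : ℕ} [NeZero d] {U V : Fin n → ZMod d}
    {s : Matrix (Fin n → ZMod d) (Fin n → ZMod d) ℂ} (hs : Supp s V) (h : dotp U V = 0) :
    PauliWord d n U 0 * s = s * PauliWord d n U 0 := by
  rw [pauli_diag]
  ext J K
  rw [Matrix.diagonal_mul, Matrix.mul_diagonal]
  by_cases hJ : s J K = 0
  · simp [hJ]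
  · rw [(hs J K).1 hJ, dotp_add_right', h, add_zero, mul_comm]

lemma pauli_pow {d n : ℕ} [NeZero d] (U : Fin n → ZMod d) : PauliWord d n U 0 ^ d = 1 := by
  rw [pauli_diag, Matrix.diagonal_pow, ← Matrix.diagonal_one]
  congr 1
  ext J
  simp only [Pi.pow_apply]
  rw [← AddChar.map_nsmul_eq_pow]
  simp

lemma pauli_inj {d n : ℕ} [NeZero d] {U U' : Fin n → ZMod d}
    (h : PauliWord d n U 0 = PauliWord d n U' 0) : U = U' := by
  rw [pauli_diag, pauli_diag] at h
  have h := Matrix.diagonal_injective h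
  ext i
  have h2 := ZMod.injective_stdAddChar (congrFun h (Pi.single i 1))
  simpa [dotp, Pi.single_apply] using h2

lemma card_perp {d n : ℕ} [NeZero d] (D : AddSubgroup (Fin n → ZMod d)) :
    d ^ n ≤ Nat.card {U : Fin n → ZMod d // ∀ V ∈ D, dotp U V = 0} * Nat.card D := by
  classical
  let φ : (Fin n → ZMod d) →+ (D →+ ZMod d) :=
    { toFun := fun U =>
        { toFun := fun V => dotp U V
          map_zero' := dotp_zero_right' U
          map_add' := fun A B => dotp_add_right' U A B }
      map_zero' := by ext V; exact dotp_zero_left' _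
      map_add' := fun A B => by ext V; exact dotp_add_left' A B _ }
  have h1 : Nat.card φ.ker * Nat.card φ.range = d ^ n := by
    rw [← AddSubgroup.index_ker, AddSubgroup.card_mul_index]
    simp
  have h2 : Nat.card {U : Fin n → ZMod d // ∀ V ∈ D, dotp U V = 0} = Nat.card φ.ker := by
    apply Nat.card_congr
    refine Equiv.subtypeEquivRight fun U => ?_
    rw [AddMonoidHom.mem_ker, DFunLike.ext_iff]
    simp [φ]
  have : Finite (D →+ ZMod d) := Finite.of_injective _ DFunLike.coe_injective
  have h3 : Nat.card φ.range ≤ Nat.card (D →+ ZMod d) :=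
    Nat.card_le_card_of_injective _ Subtype.val_injective
  have h4 : Nat.card (D →+ ZMod d) ≤ Nat.card (AddChar D ℂ) := by
    apply Nat.card_le_card_of_injective (fun f => (ZMod.stdAddChar (N := d)).compAddMonoidHom f)
    intro f g hfg
    ext V
    exact ZMod.injective_stdAddChar (DFunLike.congr_fun hfg V)
  have h5 : Nat.card (AddChar D ℂ) = Nat.card D := by
    rw [Nat.card_eq_fintype_card, Nat.card_eq_fintype_card]
    exact AddChar.card_eq
  rw [← h1, h2]
  exact Nat.mul_le_mul_left _ (by omega)

theorem extend_abelian_pauli_subgroup (d n : ℕ) [NeZero d] (hd : 2 ≤ d) (hn : 1 ≤ n)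
    (S : Set (Matrix (Fin n → ZMod d) (Fin n → ZMod d) ℂ))
    (hSsub : S ⊆ PauliSet d n)
    (hS1 : (1 : Matrix (Fin n → ZMod d) (Fin n → ZMod d) ℂ) ∈ S)
    (hSmul : ∀ a ∈ S, ∀ b ∈ S, a * b ∈ S)
    (hSinv : ∀ a ∈ S, ∃ b ∈ S, a * b = 1)
    (hScomm : ∀ a ∈ S, ∀ b ∈ S, a * b = b * a)
    (hSscal : ∀ c : ℂ, c • (1 : Matrix (Fin n → ZMod d) (Fin n → ZMod d) ℂ) ∈ S →
      c • (1 : Matrix (Fin n → ZMod d) (Fin n → ZMod d) ℂ) = 1)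
    (hcard : Nat.card S < d ^ n) :
    ∃ P ∈ PauliSet d n, P ∉ S ∧
      (∀ a ∈ Submonoid.closure (S ∪ {P}), ∀ b ∈ Submonoid.closure (S ∪ {P}),
        a * b = b * a) ∧
      (∀ c : ℂ, c • (1 : Matrix (Fin n → ZMod d) (Fin n → ZMod d) ℂ) ∈
          Submonoid.closure (S ∪ {P}) →
        c • (1 : Matrix (Fin n → ZMod d) (Fin n → ZMod d) ℂ) = 1) := by
  classical
  have hq0 : q d ≠ 0 := Complex.exp_ne_zero _
  have hqp : IsPrimitiveRoot (q d) d := Complex.isPrimitiveRoot_exp d (NeZero.ne d)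
  have hone : (1 : Matrix (Fin n → ZMod d) (Fin n → ZMod d) ℂ) ≠ 0 := one_ne_zero
  have hsm1 : ∀ c : ℂ, c • (1 : Matrix (Fin n → ZMod d) (Fin n → ZMod d) ℂ) = 1 → c = 1 := by
    intro c hc
    have := congrFun (congrFun hc 0) 0
    simpa using this
  have hSpow : ∀ s ∈ S, ∀ k : ℕ, s ^ k ∈ S := by
    intro s hs k
    induction k with
    | zero => simpa using hS1
    | succ k ih => rw [pow_succ]; exact hSmul _ ih _ hs
  have hSfin : Finite S := by
    have : (PauliSet d n).Finite := by
      have : PauliSet d n = Set.range (fun p : ZMod d × (Fin n → ZMod d) × (Fin n → ZMod d) =>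
          q d ^ p.1.val • PauliWord d n p.2.1 p.2.2) := by
        ext g
        simp only [PauliSet, Set.mem_ofPred_eq, Set.mem_range, Prod.exists, eq_comm]
      rw [this]
      exact Set.finite_range _
    exact (this.subset hSsub).to_subtype
  -- the group of shifts
  let D : AddSubgroup (Fin n → ZMod d) :=
    { carrier := {V | ∃ s ∈ S, Supp s V}
      zero_mem' := ⟨1, hS1, supp_one⟩
      add_mem' := by
        rintro V V' ⟨s, hs, h⟩ ⟨t, ht, h'⟩
        exact ⟨s * t, hSmul _ hs _ ht, supp_mul h h'⟩
      neg_mem' := by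
        rintro V ⟨s, hs, h⟩
        obtain ⟨b, hb, hsb⟩ := hSinv s hs
        obtain ⟨V', h'⟩ := supp_pauli (hSsub hb)
        have h2 := supp_mul h h'
        rw [hsb] at h2
        have h3 := supp_unique h2 supp_one
        rw [neg_eq_of_add_eq_zero_right h3]
        exact ⟨b, hb, h'⟩ }
  have hU : ∃ U : Fin n → ZMod d, (∀ V ∈ D, dotp U V = 0) ∧
      ∀ c : ℂ, ∀ s ∈ S, PauliWord d n U 0 ≠ c • s := by
    by_contra! hcon
    choose! c s hs hcs using hcon
    have hD : ∀ V ∈ D, ∃ t ∈ S, Supp t V := fun V h => h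
    choose! t ht htV using hD
    have hcard2 : Nat.card ({U : Fin n → ZMod d // ∀ V ∈ D, dotp U V = 0} × D) ≤ Nat.card S := by
      apply Nat.card_le_card_of_injective
        (fun p => (⟨s p.1.1 * t p.2.1, hSmul _ (hs _ p.1.2) _ (ht _ p.2.2)⟩ : S))
      rintro ⟨⟨U, hU⟩, ⟨V, hV⟩⟩ ⟨⟨U', hU'⟩, ⟨V', hV'⟩⟩ h
      simp only [Subtype.mk.injEq] at h
      have hsupp : ∀ U, (∀ V ∈ D, dotp U V = 0) →
          Supp (s U) 0 ∧ c U * s U 0 0 = 1 := by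
        intro U hU
        have e := hcs U hU
        have e0 : c U * s U 0 0 = 1 := by
          have := congrFun (congrFun e 0) 0
          rw [pauli_diag] at this
          simpa [dotp_zero_right'] using this.symm
        refine ⟨?_, e0⟩
        have hc0 : c U ≠ 0 := left_ne_zero_of_mul_eq_one e0
        intro J K
        have := congrFun (congrFun e J) K
        rw [pauli_diag] at this
        have h1 : s U J K ≠ 0 ↔ (c U • s U) J K ≠ 0 := by simp [hc0]
        rw [h1, ← this, add_zero, Matrix.diagonal_apply]
        have hne : (ZMod.stdAddChar (dotp U J) : ℂ) ≠ 0 := by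
          rw [← q_pow_val]; exact pow_ne_zero _ hq0
        simp [hne]
      have hVV : V = V' := by
        have a := supp_mul (hsupp U hU).1 (htV V hV)
        have b := supp_mul (hsupp U' hU').1 (htV V' hV')
        rw [h] at a
        simpa using supp_unique a b
      subst hVV
      obtain ⟨b, hb, htb⟩ := hSinv _ (ht V hV)
      have hss : s U = s U' := by
        have := congrArg (· * b) h
        simpa [mul_assoc, htb] using this
      have hcc : c U = c U' := by
        have a := (hsupp U hU).2
        have b := (hsupp U' hU').2
        rw [← hss] at b
        exact mul_right_cancel₀ (right_ne_zero_of_mul_eq_one a) (a.trans b.symm)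
      have : U = U' := by
        apply pauli_inj
        rw [hcs U hU, hcs U' hU', hss, hcc]
      subst this
      rfl
    rw [Nat.card_prod] at hcard2
    have := card_perp D
    omega
  obtain ⟨U, hUD, hUS⟩ := hU
  set P₀ := PauliWord d n U 0 with hP₀
  have hcomm₀ : ∀ s ∈ S, P₀ * s = s * P₀ := by
    intro s hs
    obtain ⟨V, hV⟩ := supp_pauli (hSsub hs)
    exact pauli_comm hV (hUD V ⟨s, hs, hV⟩)
  have hP₀d : P₀ ^ d = 1 := pauli_pow U
  -- exponents landing in scalar multiples of S
  let E : ℕ → Prop := fun i => ∃ c : ℂ, ∃ s ∈ S, P₀ ^ i = c • s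
  have hEd : 0 < d ∧ E d := ⟨by omega, 1, 1, hS1, by simpa using hP₀d⟩
  have hex : ∃ m, 0 < m ∧ E m := ⟨d, hEd⟩
  obtain ⟨hm0, c₀, s₀, hs₀, hm⟩ := Nat.find_spec hex
  have hmin : ∀ i, 0 < i → E i → Nat.find hex ≤ i := fun i h1 h2 => Nat.find_min' hex ⟨h1, h2⟩
  generalize Nat.find hex = m at hm0 hm hmin
  have hc₀ : c₀ ≠ 0 := by
    rintro rfl
    rw [zero_smul] at hm
    have : P₀ ^ (m * d) = 0 := by rw [pow_mul, hm, zero_pow (by omega)]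
    rw [mul_comm, pow_mul, hP₀d, one_pow] at this
    exact hone this
  have hdvd : ∀ i, E i → m ∣ i := by
    rintro i ⟨c, s, hs, hi⟩
    apply Nat.dvd_of_mod_eq_zero
    by_contra hr
    have hlt := Nat.mod_lt i hm0
    have := hmin (i % m) (Nat.pos_of_ne_zero hr) ?_
    · omega
    obtain ⟨b, hb, hsb⟩ := hSinv _ (hSpow s₀ hs₀ (i / m))
    have e : P₀ ^ i = P₀ ^ (i % m) * (P₀ ^ m) ^ (i / m) := by
      rw [← pow_mul, ← pow_add, Nat.mod_add_div]
    rw [hi, hm, smul_pow] at e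
    refine ⟨(c₀ ^ (i / m))⁻¹ * c, s * b, hSmul _ hs _ hb, ?_⟩
    have e2 := congrArg (· * b) e
    simp only [Matrix.mul_smul, Matrix.smul_mul, mul_assoc, hsb, mul_one] at e2
    rw [mul_smul, e2, smul_smul, inv_mul_cancel₀ (pow_ne_zero _ hc₀), one_smul]
  obtain ⟨l, hl⟩ := hdvd d hEd.2
  have hc₀l : c₀ ^ l = 1 := by
    have e : P₀ ^ d = (P₀ ^ m) ^ l := by
      rw [← pow_mul]; exact congrArg (P₀ ^ ·) hl
    rw [hP₀d, hm, smul_pow] at e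
    have e2 : (c₀ ^ l)⁻¹ • (1 : Matrix (Fin n → ZMod d) (Fin n → ZMod d) ℂ) = s₀ ^ l := by
      rw [e, smul_smul, inv_mul_cancel₀ (pow_ne_zero _ hc₀), one_smul]
    have e3 := hSscal _ (by rw [e2]; exact hSpow _ hs₀ _)
    simpa using hsm1 _ e3
  have hl0 : NeZero l := ⟨by rintro rfl; omega⟩
  obtain ⟨a, -, ha⟩ := (hqp.pow (by omega) hl).eq_pow_of_pow_eq_one hc₀l
  -- the inverse phase
  let k : ZMod d := -(a : ZMod d)
  have hk : q d ^ k.val * q d ^ a = 1 := by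
    rw [← pow_add]
    apply (hqp.pow_eq_one_iff_dvd _).2
    rw [← ZMod.natCast_eq_zero_iff]
    simp [k]
  have hk0 : q d ^ k.val ≠ 0 := pow_ne_zero _ hq0
  set P := q d ^ k.val • P₀ with hP
  have hPm : P ^ m = s₀ := by
    rw [hP, smul_pow, hm, smul_smul, ← ha]
    have : (q d ^ k.val) ^ m * (q d ^ m) ^ a = 1 := by
      rw [← pow_mul (q d) m a, mul_comm m a, pow_mul (q d) a m, ← mul_pow, hk, one_pow]
    rw [this, one_smul]
  have hPcomm : ∀ s ∈ S, P * s = s * P := by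
    intro s hs
    rw [hP, Matrix.smul_mul, Matrix.mul_smul, hcomm₀ s hs]
  have hform : ∀ x ∈ Submonoid.closure (S ∪ {P}), ∃ s ∈ S, ∃ i : ℕ, x = s * P ^ i := by
    intro x hx
    induction hx using Submonoid.closure_induction with
    | mem x hx =>
      rcases hx with hx | hx
      · exact ⟨x, hx, 0, by simp⟩
      · rw [Set.mem_singleton_iff] at hx
        exact ⟨1, hS1, 1, by simp [hx]⟩
    | one => exact ⟨1, hS1, 0, by simp⟩
    | mul x y _ _ hx hy =>
      obtain ⟨s, hs, i, rfl⟩ := hx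
      obtain ⟨t, ht, j, rfl⟩ := hy
      refine ⟨s * t, hSmul _ hs _ ht, i + j, ?_⟩
      have : Commute (P ^ i) t := Commute.pow_left (hPcomm t ht) i
      rw [mul_assoc, ← mul_assoc (P ^ i), this.eq, pow_add]
      simp only [mul_assoc]
  refine ⟨P, ⟨k, U, 0, rfl⟩, ?_, ?_, ?_⟩
  · intro hPS
    apply hUS (q d ^ k.val)⁻¹ P hPS
    rw [hP, smul_smul, inv_mul_cancel₀ hk0, one_smul]
  · intro x hx y hy
    obtain ⟨s, hs, i, rfl⟩ := hform x hx
    obtain ⟨t, ht, j, rfl⟩ := hform y hy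
    have h1 : Commute s t := hScomm s hs t ht
    have h2 : Commute P s := hPcomm s hs
    have h3 : Commute P t := hPcomm t ht
    have h4 : Commute (s * P ^ i) (t * P ^ j) :=
      (h1.mul_left (h3.pow_left i)).mul_right
        (((h2.pow_left j).symm).mul_left ((Commute.refl P).pow_pow i j))
    exact h4
  · intro c hc
    obtain ⟨s, hs, i, hi⟩ := hform _ hc
    obtain ⟨b, hb, hsb⟩ := hSinv s hs
    have hbs : b * s = 1 := by rw [hScomm b hb s hs, hsb]
    have hPi : P ^ i = c • b := by
      have := congrArg (b * ·) hi
      simp only [← mul_assoc, hbs, one_mul, Matrix.mul_smul, mul_one] at this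
      exact this.symm
    have hEi : E i := by
      refine ⟨((q d ^ k.val) ^ i)⁻¹ * c, b, hb, ?_⟩
      rw [mul_smul, ← hPi, hP, smul_pow, smul_smul, inv_mul_cancel₀ (pow_ne_zero _ hk0), one_smul]
    obtain ⟨r, rfl⟩ := hdvd i hEi
    apply hSscal
    rw [hi, pow_mul, hPm]
    exact hSmul _ hs _ (hSpow _ hs₀ _)
end

section
/- Let S be an abelian subgroup of the Pauli group G_d^n with no nontrivial scalars and with Nat.card S = d^n. Then, up to phase, S is a maximal abelian set of Pauli operators: every P ∈ G_d^n that commutes with every element of S can be written as P = q^k • s for some k ∈ ZMod d and some s ∈ S. -/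
open Matrix

namespace PauliAux

variable {d n : ℕ} [NeZero d]

lemma q_prim : IsPrimitiveRoot (q d) d := Complex.isPrimitiveRoot_exp d (NeZero.ne d)

lemma chi_add (a b : ZMod d) : q d ^ (a + b).val = q d ^ a.val * q d ^ b.val := by
  rw [ZMod.val_add, ← pow_add]
  exact (pow_eq_pow_mod _ (q_prim (d := d)).pow_eq_one).symm

lemma chi_eq_one {a : ZMod d} (h : q d ^ a.val = 1) : a = 0 := by
  have h1 := (q_prim (d := d)).dvd_of_pow_eq_one a.val h
  have h2 := Nat.eq_zero_of_dvd_of_lt h1 (ZMod.val_lt a)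
  exact (ZMod.val_eq_zero a).mp h2

lemma chi_zero : q d ^ (0 : ZMod d).val = 1 := by simp

lemma chi_ne (a : ZMod d) : q d ^ a.val ≠ 0 :=
  pow_ne_zero _ ((q_prim (d := d)).ne_zero (NeZero.ne d))

lemma dotp_add_left (A B C : Fin n → ZMod d) : dotp (A + B) C = dotp A C + dotp B C := by
  simp [dotp, add_mul, Finset.sum_add_distrib]

lemma dotp_add_right (A B C : Fin n → ZMod d) : dotp A (B + C) = dotp A B + dotp A C := by
  simp [dotp, mul_add, Finset.sum_add_distrib]

lemma word_mul (U V U' V' : Fin n → ZMod d) :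
    PauliWord d n U V * PauliWord d n U' V' =
      q d ^ (dotp U' (-V)).val • PauliWord d n (U + U') (V + V') := by
  ext J K
  rw [Matrix.mul_apply, Finset.sum_eq_single (J + -V)]
  · simp only [PauliWord, Matrix.of_apply, Matrix.smul_apply, smul_eq_mul]
    by_cases h : J = K + (V + V')
    · have h2 : J + -V = K + V' := by rw [h]; abel
      rw [if_pos (by abel), if_pos h2, if_pos h, dotp_add_right, chi_add, dotp_add_left, chi_add]
      ring
    · have h2 : ¬ J + -V = K + V' := by
        intro h3; apply h
        have : J = (J + -V) + V := by abel
        rw [this, h3]; abel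
      rw [if_neg h2, if_neg h]; simp
  · intro L _ hL
    have : ¬ J = L + V := by
      rintro rfl; apply hL; abel
    simp [PauliWord, this]
  · simp

lemma word_zero : PauliWord d n 0 0 = 1 := by
  ext J K
  simp [PauliWord, Matrix.one_apply, dotp]

lemma word_trace {U V : Fin n → ZMod d} (h : (PauliWord d n U V).trace ≠ 0) : U = 0 ∧ V = 0 := by
  by_cases hV : V = 0
  · refine ⟨?_, hV⟩
    subst hV
    by_contra hU
    obtain ⟨i, hi⟩ := Function.ne_iff.mp hU
    have e : (PauliWord d n U 0).trace = ∑ J : Fin n → ZMod d, q d ^ (dotp U J).val := by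
      simp [Matrix.trace, PauliWord]
    have e2 : ∑ J : Fin n → ZMod d, q d ^ (dotp U J).val
        = (∑ J : Fin n → ZMod d, q d ^ (dotp U J).val) * q d ^ (U i).val := by
      rw [Finset.sum_mul, ← Equiv.sum_comp (Equiv.addRight (Pi.single i (1 : ZMod d)))]
      refine Finset.sum_congr rfl fun J _ => ?_
      rw [← chi_add, Equiv.coe_addRight, dotp_add_right]
      congr 3
      simp [dotp, Pi.single_apply]
    rw [e] at h
    exact hi (chi_eq_one (mul_left_cancel₀ h (by rw [← e2, mul_one])))
  · exfalso
    apply h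
    simp [Matrix.trace, PauliWord, hV]

lemma set_mul {a b : Matrix (Fin n → ZMod d) (Fin n → ZMod d) ℂ}
    (ha : a ∈ PauliSet d n) (hb : b ∈ PauliSet d n) : a * b ∈ PauliSet d n := by
  obtain ⟨k, U, V, rfl⟩ := ha
  obtain ⟨l, U', V', rfl⟩ := hb
  refine ⟨k + l + dotp U' (-V), U + U', V + V', ?_⟩
  rw [Matrix.smul_mul, Matrix.mul_smul, word_mul, smul_smul, smul_smul, chi_add, chi_add]

lemma set_trace {a : Matrix (Fin n → ZMod d) (Fin n → ZMod d) ℂ}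
    (ha : a ∈ PauliSet d n) (h : a.trace ≠ 0) : ∃ k : ZMod d, a = q d ^ k.val • 1 := by
  obtain ⟨k, U, V, rfl⟩ := ha
  rw [Matrix.trace_smul] at h
  obtain ⟨rfl, rfl⟩ := word_trace (right_ne_zero_of_mul h)
  exact ⟨k, by rw [word_zero]⟩

lemma set_left_inv {a : Matrix (Fin n → ZMod d) (Fin n → ZMod d) ℂ}
    (ha : a ∈ PauliSet d n) : ∃ (b : Matrix (Fin n → ZMod d) (Fin n → ZMod d) ℂ) (c : ℂ),
      c ≠ 0 ∧ b * a = c • 1 := by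
  obtain ⟨k, U, V, rfl⟩ := ha
  refine ⟨PauliWord d n (-U) (-V), _, mul_ne_zero (chi_ne k) (chi_ne (dotp U (- -V))), ?_⟩
  rw [Matrix.mul_smul, word_mul, smul_smul, neg_add_cancel, neg_add_cancel, word_zero]

/-- A matrix commuting with an idempotent of trace one acts on its range as a scalar. -/
lemma rank_one {ι : Type*} [Fintype ι] [DecidableEq ι] (E P : Matrix ι ι ℂ)
    (hE : E * E = E) (htr : E.trace = 1) (hP : P * E = E * P) : ∃ c : ℂ, P * E = c • E := by
  have hid : IsIdempotentElem (Matrix.toLin' E) := by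
    rw [IsIdempotentElem, Module.End.mul_eq_comp, ← Matrix.toLin'_mul, hE]
  have h1 := (LinearMap.isProj_range_iff_isIdempotentElem (Matrix.toLin' E)).mpr hid
  have h2 := h1.trace
  rw [Matrix.trace_toLin'_eq, htr] at h2
  have h3 : Module.finrank ℂ (LinearMap.range (Matrix.toLin' E)) = 1 := by exact_mod_cast h2.symm
  obtain ⟨v, _, hv⟩ := finrank_eq_one_iff'.mp h3
  have hrange : ∀ x, ∃ c : ℂ, c • (v : ι → ℂ) = E *ᵥ x := fun x => by
    obtain ⟨c, hc⟩ := hv ⟨E *ᵥ x, ⟨x, by simp⟩⟩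
    exact ⟨c, congrArg Subtype.val hc⟩
  have hEv : E *ᵥ (v : ι → ℂ) = v := by
    obtain ⟨y, hy⟩ := v.2
    rw [← hy, Matrix.toLin'_apply, Matrix.mulVec_mulVec, hE]
  obtain ⟨c, hc⟩ := hrange (P *ᵥ v)
  refine ⟨c, ?_⟩
  apply Matrix.toLin'.injective
  refine LinearMap.ext fun x => ?_
  obtain ⟨a, ha⟩ := hrange x
  have hPv : P *ᵥ (v : ι → ℂ) = c • (v : ι → ℂ) := by
    rw [hc, Matrix.mulVec_mulVec, ← hP, ← Matrix.mulVec_mulVec, hEv]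
  rw [Matrix.toLin'_apply, Matrix.toLin'_apply, ← Matrix.mulVec_mulVec, Matrix.smul_mulVec, ← ha,
    Matrix.mulVec_smul, hPv, smul_comm]

end PauliAux

theorem maximal_abelian_up_to_phase (d n : ℕ) [NeZero d] (hd : 2 ≤ d) (hn : 1 ≤ n)
    (S : Set (Matrix (Fin n → ZMod d) (Fin n → ZMod d) ℂ))
    (hSsub : S ⊆ PauliSet d n)
    (hS1 : (1 : Matrix (Fin n → ZMod d) (Fin n → ZMod d) ℂ) ∈ S)
    (hSmul : ∀ a ∈ S, ∀ b ∈ S, a * b ∈ S)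
    (hSinv : ∀ a ∈ S, ∃ b ∈ S, a * b = 1)
    (hScomm : ∀ a ∈ S, ∀ b ∈ S, a * b = b * a)
    (hSscal : ∀ c : ℂ, c • (1 : Matrix (Fin n → ZMod d) (Fin n → ZMod d) ℂ) ∈ S →
      c • (1 : Matrix (Fin n → ZMod d) (Fin n → ZMod d) ℂ) = 1)
    (hcard : Nat.card S = d ^ n) :
    ∀ P ∈ PauliSet d n, (∀ s ∈ S, P * s = s * P) →
      ∃ (k : ZMod d), ∃ s ∈ S, P = q d ^ k.val • s := by
  classical
  intro P hP hcomm
  by_contra hne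
  have hdn : d ^ n ≠ 0 := pow_ne_zero _ (NeZero.ne d)
  have hfin : S.Finite := by
    have : Finite S := Nat.finite_of_card_ne_zero (by rw [hcard]; exact hdn)
    exact Set.toFinite S
  obtain ⟨F, rfl⟩ := hfin.exists_finset_coe
  simp only [Finset.mem_coe] at *
  have hF : F.card = d ^ n := by
    rw [← hcard]; simp
  obtain ⟨N, hN⟩ : ∃ N : ℂ, N = ((d ^ n : ℕ) : ℂ) := ⟨_, rfl⟩
  have hN0 : N ≠ 0 := by rw [hN]; exact_mod_cast hdn
  set A : Matrix (Fin n → ZMod d) (Fin n → ZMod d) ℂ := ∑ s ∈ F, s with hA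
  have hsA : ∀ s ∈ F, s * A = A := by
    intro s hs
    obtain ⟨t, ht, hst⟩ := hSinv s hs
    have hts : t * s = 1 := by rw [hScomm t ht s hs, hst]
    rw [hA, Finset.mul_sum]
    refine Finset.sum_bij' (fun x _ => s * x) (fun x _ => t * x) (fun x hx => hSmul s hs x hx)
      (fun x hx => hSmul t ht x hx) ?_ ?_ ?_
    · intro x _; simp only [← Matrix.mul_assoc, hts, Matrix.one_mul]
    · intro x _; simp only [← Matrix.mul_assoc, hst, Matrix.one_mul]
    · intro x _; rfl
  have hAA : A * A = N • A := by
    conv_lhs => lhs; rw [hA]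
    rw [Finset.sum_mul, Finset.sum_congr rfl hsA, Finset.sum_const, hF, hN, Nat.cast_smul_eq_nsmul]
  have hAtr : A.trace = N := by
    rw [hA, Matrix.trace_sum, Finset.sum_eq_single 1]
    · simp [Matrix.trace_one, hN]
    · intro s hs hs1
      by_contra h
      obtain ⟨k, hk⟩ := PauliAux.set_trace (hSsub hs) h
      exact hs1 (hk.trans (hSscal _ (hk ▸ hs)))
    · intro h; exact absurd hS1 h
  have hPA : P * A = A * P := by
    rw [hA, Finset.mul_sum, Finset.sum_mul]
    exact Finset.sum_congr rfl hcomm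
  have hPAtr : (P * A).trace = 0 := by
    rw [hA, Finset.mul_sum, Matrix.trace_sum]
    refine Finset.sum_eq_zero fun s hs => ?_
    by_contra h
    obtain ⟨k, hk⟩ := PauliAux.set_trace (PauliAux.set_mul hP (hSsub hs)) h
    obtain ⟨t, ht, hst⟩ := hSinv s hs
    refine hne ⟨k, t, ht, ?_⟩
    rw [← Matrix.mul_one P, ← hst, ← Matrix.mul_assoc, hk, Matrix.smul_mul, Matrix.one_mul]
  obtain ⟨c, hc⟩ := PauliAux.rank_one (N⁻¹ • A) P
    (by rw [Matrix.smul_mul, Matrix.mul_smul, hAA, smul_smul, smul_smul, mul_assoc, inv_mul_cancel₀ hN0, mul_one])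
    (by rw [Matrix.trace_smul, hAtr, smul_eq_mul, inv_mul_cancel₀ hN0])
    (by rw [Matrix.smul_mul, Matrix.mul_smul, hPA])
  have hc0 : c = 0 := by
    have := congrArg Matrix.trace hc
    rw [Matrix.mul_smul, Matrix.trace_smul, hPAtr, Matrix.trace_smul, Matrix.trace_smul, hAtr,
      smul_eq_mul, smul_eq_mul, smul_eq_mul, inv_mul_cancel₀ hN0] at this
    simpa using this.symm
  have hPA0 : P * A = 0 := by
    rw [hc0, zero_smul, Matrix.mul_smul] at hc
    exact (smul_eq_zero.mp hc).resolve_left (inv_ne_zero hN0)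
  obtain ⟨b, z, hz, hbz⟩ := PauliAux.set_left_inv hP
  have hA0 : A = 0 := by
    have : z • A = 0 := by
      rw [← Matrix.one_mul A, ← Matrix.smul_mul, ← hbz, Matrix.mul_assoc, hPA0, Matrix.mul_zero]
    exact (smul_eq_zero.mp this).resolve_left hz
  rw [hA0, Matrix.trace_zero] at hAtr
  exact hN0 hAtr.symm
end

section
/- Let S be an abelian subgroup of the Pauli group G_d^n with no nontrivial scalars and with Nat.card S = d^n, and let w_1, …, w_K ∈ G_d^n. Then the centralizer C_S(W) = {g ∈ S | g * w_i = w_i * g for all i = 1,…,K} has the same cardinality as the set R(S) ∩ {x | ω(R(w_i), x) = 0 for all i}, i.e. Nat.card C_S(W) = Nat.card {x ∈ R(S) | ω(R(w_i), x) = 0 for all i = 1,…,K}. -/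
open Matrix

/-- The symplectic product `ω((U1,U2),(V1,V2)) = ⟨U1,V2⟩ - ⟨U2,V1⟩`. -/
def symp {n d : ℕ} (x y : (Fin n → ZMod d) × (Fin n → ZMod d)) : ZMod d :=
  dotp x.1 y.2 - dotp x.2 y.1

lemma dotp_sub_right {n d : ℕ} (A B C : Fin n → ZMod d) :
    dotp A (B - C) = dotp A B - dotp A C := by
  simp [dotp, mul_sub, Finset.sum_sub_distrib]

lemma dotp_comm' {n d : ℕ} (A B : Fin n → ZMod d) : dotp A B = dotp B A := by
  simp [dotp, mul_comm]

lemma word_mul_apply (d n : ℕ) [NeZero d] (U V U' V' J L : Fin n → ZMod d) :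
    (PauliWord d n U V * PauliWord d n U' V') J L =
      if J = L + V' + V then
        (ZMod.stdAddChar (dotp U J + dotp U' J - dotp U' V) : ℂ) else 0 := by
  rw [Matrix.mul_apply, Finset.sum_eq_single (J - V)]
  · have h : (J - V = L + V') ↔ (J = L + V' + V) := sub_eq_iff_eq_add
    simp only [PauliWord, Matrix.of_apply, sub_add_cancel, if_true, h, q_pow_val]
    split_ifs with h1
    · rw [← AddChar.map_add_eq_mul, dotp_sub_right]
      congr 1
      ring
    · simp
  · intro b _ hb
    have : ¬ (J = b + V) := fun h => hb (by rw [h]; simp)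
    simp [PauliWord, this]
  · simp

lemma word_comm_iff (d n : ℕ) [NeZero d] (U V U' V' : Fin n → ZMod d) :
    PauliWord d n U V * PauliWord d n U' V' = PauliWord d n U' V' * PauliWord d n U V ↔
      symp (U', V') (U, V) = 0 := by
  have hs : symp (U', V') (U, V) = dotp U' V - dotp U V' := by
    simp only [symp]
    rw [dotp_comm' V' U]
  rw [hs]
  constructor
  · intro h
    have h1 := congrFun (congrFun h (V' + V)) 0
    rw [word_mul_apply, word_mul_apply, if_pos (by simp), if_pos (by simp [add_comm])] at h1
    have h2 := ZMod.injective_stdAddChar h1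
    linear_combination -h2
  · intro h
    ext J L
    rw [word_mul_apply, word_mul_apply]
    have e : L + V' + V = L + V + V' := by abel
    rw [e]
    have e2 : dotp U J + dotp U' J - dotp U' V = dotp U' J + dotp U J - dotp U V' := by
      linear_combination -h
    rw [e2]

theorem card_centralizer_eq_card_kernel (d n K : ℕ) [NeZero d] (hd : 2 ≤ d) (hn : 1 ≤ n)
    (Rmap : Matrix (Fin n → ZMod d) (Fin n → ZMod d) ℂ →
      (Fin n → ZMod d) × (Fin n → ZMod d))
    (hR : ∀ (k : ZMod d) (U V : Fin n → ZMod d),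
      Rmap (q d ^ k.val • PauliWord d n U V) = (U, V))
    (S : Set (Matrix (Fin n → ZMod d) (Fin n → ZMod d) ℂ))
    (hSsub : S ⊆ PauliSet d n)
    (hS1 : (1 : Matrix (Fin n → ZMod d) (Fin n → ZMod d) ℂ) ∈ S)
    (hSmul : ∀ a ∈ S, ∀ b ∈ S, a * b ∈ S)
    (hSinv : ∀ a ∈ S, ∃ b ∈ S, a * b = 1)
    (hScomm : ∀ a ∈ S, ∀ b ∈ S, a * b = b * a)
    (hSscal : ∀ c : ℂ, c • (1 : Matrix (Fin n → ZMod d) (Fin n → ZMod d) ℂ) ∈ S →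
      c • (1 : Matrix (Fin n → ZMod d) (Fin n → ZMod d) ℂ) = 1)
    (hcard : Nat.card S = d ^ n)
    (w : Fin K → Matrix (Fin n → ZMod d) (Fin n → ZMod d) ℂ)
    (hw : ∀ i, w i ∈ PauliSet d n) :
    Nat.card {g : Matrix (Fin n → ZMod d) (Fin n → ZMod d) ℂ |
        g ∈ S ∧ ∀ i, g * w i = w i * g} =
      Nat.card {x : (Fin n → ZMod d) × (Fin n → ZMod d) |
        x ∈ Rmap '' S ∧ ∀ i, symp (Rmap (w i)) x = 0} := by
  have hq : ∀ m : ℕ, q d ^ m ≠ 0 := fun m => pow_ne_zero _ (Complex.exp_ne_zero _)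
  have hcm : ∀ g ∈ S, ∀ i, g * w i = w i * g ↔ symp (Rmap (w i)) (Rmap g) = 0 := by
    intro g hg i
    obtain ⟨k, U, V, rfl⟩ := hSsub hg
    obtain ⟨l, U', V', hwi⟩ := hw i
    rw [hwi, hR, hR, ← word_comm_iff]
    simp only [Matrix.smul_mul, Matrix.mul_smul]
    rw [smul_comm, (smul_right_injective _ (hq _)).eq_iff, (smul_right_injective _ (hq _)).eq_iff]
  have hinj : Set.InjOn Rmap S := by
    intro a ha b hb hab
    obtain ⟨b', hb', hbb⟩ := hSinv b hb
    obtain ⟨k, U, V, rfl⟩ := hSsub ha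
    obtain ⟨l, U', V', rfl⟩ := hSsub hb
    rw [hR, hR, Prod.mk.injEq] at hab
    obtain ⟨rfl, rfl⟩ := hab
    have e : q d ^ k.val • PauliWord d n U V =
        (q d ^ k.val * (q d ^ l.val)⁻¹) • (q d ^ l.val • PauliWord d n U V) := by
      rw [smul_smul, mul_assoc, inv_mul_cancel₀ (hq _), mul_one]
    have h1 := hSmul _ ha _ hb'
    rw [e, Matrix.smul_mul, hbb] at h1
    have h2 := hSscal _ h1
    rw [e]
    conv_rhs => rw [← Matrix.one_mul (q d ^ l.val • PauliWord d n U V), ← h2]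
    rw [Matrix.smul_mul, Matrix.one_mul]
  have himg : {x : (Fin n → ZMod d) × (Fin n → ZMod d) |
        x ∈ Rmap '' S ∧ ∀ i, symp (Rmap (w i)) x = 0} =
      Rmap '' {g | g ∈ S ∧ ∀ i, g * w i = w i * g} := by
    ext x
    constructor
    · rintro ⟨⟨g, hg, rfl⟩, hx⟩
      exact ⟨g, ⟨hg, fun i => (hcm g hg i).2 (hx i)⟩, rfl⟩
    · rintro ⟨g, ⟨hg, hx⟩, rfl⟩
      exact ⟨⟨g, hg, rfl⟩, fun i => (hcm g hg i).1 (hx i)⟩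
  rw [himg]
  exact (Nat.card_image_of_injOn (hinj.mono fun g hg => hg.1)).symm
end

section
/- Let S be an abelian subgroup of the Pauli group G_d^n with no nontrivial scalars and Nat.card S = d^n, let ψ be a nonzero vector in Fix(S), and let w_1, …, w_K ∈ G_d^n with w_1 = 1 be such that the vectors w_i.mulVec ψ are linearly independent over ℂ; let Q be their ℂ-span. Let A be the ZMod d-submodule of (Fin n → ZMod d) × (Fin n → ZMod d) spanned by {R(w_1), …, R(w_K)} and let B = R(S). Then there exists an abelian subgroup H of G_d^n with no nontrivial scalars whose fixed subspace Fix(H) equals Q if and only if Nat.card A = K * Nat.card (A ∩ B). -/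
open Matrix

/-- The subspace of states fixed by every matrix in `S`. -/
noncomputable def FixSubspace (d n : ℕ) [NeZero d]
    (S : Set (Matrix (Fin n → ZMod d) (Fin n → ZMod d) ℂ)) :
    Submodule ℂ ((Fin n → ZMod d) → ℂ) where
  carrier := {ψ | ∀ s ∈ S, s.mulVec ψ = ψ}
  add_mem' := by
    intro a b ha hb s hs
    simp [Matrix.mulVec_add, ha s hs, hb s hs]
  zero_mem' := by
    intro s hs
    simp [Matrix.mulVec_zero]
  smul_mem' := by
    intro c a ha s hs
    simp [Matrix.mulVec_smul, ha s hs]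



noncomputable section CWSproof

set_option linter.unusedSectionVars false

namespace CWSproof

abbrev Ph (d n : ℕ) := (Fin n → ZMod d) × (Fin n → ZMod d)
abbrev Mt (d n : ℕ) := Matrix (Fin n → ZMod d) (Fin n → ZMod d) ℂ

variable {d n : ℕ} [NeZero d]

/-- the standard character, in the form of powers of `q` -/
abbrev e (k : ZMod d) : ℂ := ZMod.stdAddChar k

lemma q_pow (k : ZMod d) : q d ^ k.val = e k := by
  have h := ZMod.stdAddChar_coe (N := d) (k.val : ℤ)
  have h2 : (((k.val : ℤ) : ZMod d)) = k := by simp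
  rw [h2] at h
  rw [e, h, q, ← Complex.exp_nat_mul]
  congr 1
  push_cast
  ring

lemma e_add (a b : ZMod d) : e (a + b) = e a * e b := AddChar.map_add_eq_mul _ _ _
lemma e_zero : e (0 : ZMod d) = 1 := AddChar.map_zero_eq_one _
lemma e_ne (a : ZMod d) : e a ≠ 0 := by
  intro h
  have := e_add a (-a)
  rw [h, add_neg_cancel, e_zero] at this
  simp at this
lemma e_inj {a b : ZMod d} (h : e a = e b) : a = b := ZMod.injective_stdAddChar h
lemma e_eq_one {a : ZMod d} (h : e a = 1) : a = 0 := e_inj (h.trans e_zero.symm)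

lemma dotp_add_left (A B C : Fin n → ZMod d) : dotp (A + B) C = dotp A C + dotp B C := by
  simp [dotp, add_mul, Finset.sum_add_distrib]
lemma dotp_add_right (A B C : Fin n → ZMod d) : dotp C (A + B) = dotp C A + dotp C B := by
  simp [dotp, mul_add, Finset.sum_add_distrib]
lemma dotp_zero_left (C : Fin n → ZMod d) : dotp 0 C = 0 := by simp [dotp]
lemma dotp_zero_right (C : Fin n → ZMod d) : dotp C 0 = 0 := by simp [dotp]
lemma dotp_single_right (C : Fin n → ZMod d) (i : Fin n) : dotp C (Pi.single i 1) = C i := by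
  simp [dotp, Pi.single_apply]
lemma dotp_single_left (C : Fin n → ZMod d) (i : Fin n) : dotp (Pi.single i 1) C = C i := by
  simp [dotp, Pi.single_apply]

/-- Pauli word with a packaged label -/
def W (x : Ph d n) : Mt d n := PauliWord d n x.1 x.2

lemma W_apply (x : Ph d n) (J K) : W x J K = if J = K + x.2 then e (dotp x.1 J) else 0 := by
  simp [W, PauliWord, q_pow]

lemma W_zero : W (0 : Ph d n) = 1 := by
  ext J K
  simp [W_apply, dotp_zero_left, Matrix.one_apply]

lemma W_mul (x y : Ph d n) : W x * W y = e (-(dotp y.1 x.2)) • W (x + y) := by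
  ext J K
  rw [Matrix.mul_apply, Finset.sum_eq_single (K + y.2)]
  · simp only [W_apply, Matrix.smul_apply, smul_eq_mul, if_true, Prod.fst_add, Prod.snd_add]
    by_cases h : J = K + y.2 + x.2
    · rw [if_pos h, if_pos (by rw [h]; abel), ← e_add, ← e_add]
      congr 1
      rw [h]
      simp only [dotp_add_left, dotp_add_right]
      ring
    · rw [if_neg h, if_neg (by intro h'; apply h; rw [h']; abel)]
      simp
  · intro b _ hb
    simp [W_apply y, hb]
  · simp

/-- symplectic form -/
def om (x y : Ph d n) : ZMod d := dotp x.1 y.2 - dotp y.1 x.2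

lemma om_add_left (x y z : Ph d n) : om (x + y) z = om x z + om y z := by
  simp [om, dotp_add_left, dotp_add_right]; ring
lemma om_add_right (x y z : Ph d n) : om z (x + y) = om z x + om z y := by
  simp [om, dotp_add_left, dotp_add_right]; ring
lemma om_zero_left (x : Ph d n) : om 0 x = 0 := by simp [om, dotp_zero_left, dotp_zero_right]
lemma om_zero_right (x : Ph d n) : om x 0 = 0 := by simp [om, dotp_zero_left, dotp_zero_right]
lemma om_swap (x y : Ph d n) : om x y = - om y x := by simp [om]

lemma om_nondeg (x : Ph d n) (h : ∀ y, om x y = 0) : x = 0 := by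
  ext i
  · simpa [om, dotp_single_right, dotp_zero_left] using h (0, Pi.single i 1)
  · simpa [om, dotp_single_left, dotp_zero_right] using h (Pi.single i 1, 0)

lemma W_comm (x y : Ph d n) : W x * W y = e (om x y) • (W y * W x) := by
  rw [W_mul, W_mul, smul_smul, ← e_add, add_comm y x]
  congr 2
  simp only [om]
  ring

def omL (x : Ph d n) : Ph d n →+ ZMod d where
  toFun y := om x y
  map_zero' := om_zero_right x
  map_add' a b := om_add_right a b x

/-- sum of a character over a finite group -/
lemma sum_char {M : Type*} [AddCommGroup M] [Fintype M] (f : M →+ ZMod d) :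
    ∑ m, e (f m) = if (∀ m, f m = 0) then (Fintype.card M : ℂ) else 0 := by
  classical
  have h := AddChar.sum_eq_ite ((ZMod.stdAddChar (N := d)).compAddMonoidHom f)
  have h2 : ((ZMod.stdAddChar (N := d)).compAddMonoidHom f = 0) ↔ ∀ m, f m = 0 := by
    constructor
    · intro h m
      have := DFunLike.congr_fun h m
      exact e_eq_one (by simpa using this)
    · intro h
      ext m
      simp [h]
  simp only [h2] at h
  simpa using h

lemma perp_card (M : Submodule (ZMod d) (Ph d n)) :
    Nat.card M * Nat.card {x : Ph d n | ∀ m ∈ M, om m x = 0} = d ^ (2 * n) := by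
  classical
  have h1 : ∑ x : Ph d n, ∑ m : M, e (om (m : Ph d n) x) =
      (Nat.card M * Nat.card {x : Ph d n | ∀ m ∈ M, om m x = 0} : ℕ) := by
    have : ∀ x : Ph d n, ∑ m : M, e (om (m : Ph d n) x) =
        if x ∈ {x : Ph d n | ∀ m ∈ M, om m x = 0} then (Nat.card M : ℂ) else 0 := by
      intro x
      have := sum_char (d := d) ((-omL x).comp M.subtype.toAddMonoidHom)
      have h3 : ∀ m : M, ((-omL x).comp M.subtype.toAddMonoidHom) m = om (m : Ph d n) x := by
        intro m
        simp [omL, om_swap (m : Ph d n) x]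
      simp only [h3] at this
      rw [this]
      simp
    rw [Finset.sum_congr rfl fun x _ => this x, ← Finset.sum_filter, Finset.sum_const,
      nsmul_eq_mul, mul_comm, Nat.card_eq_fintype_card (α := {x : Ph d n | ∀ m ∈ M, om m x = 0}),
      Fintype.card_subtype]
    push_cast
    rfl
  have h2 : ∑ m : M, ∑ x : Ph d n, e (om (m : Ph d n) x) = (d ^ (2 * n) : ℕ) := by
    rw [Finset.sum_eq_single (0 : M)]
    · simp [om_zero_left, two_mul, pow_add]
    · intro m _ hm
      have := sum_char (omL (m : Ph d n))
      rw [if_neg] at this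
      · exact this
      · intro h
        exact hm (Subtype.ext (om_nondeg _ h))
    · simp
  rw [Finset.sum_comm] at h2
  rw [h1] at h2
  exact_mod_cast h2

lemma trace_W (x : Ph d n) : (W x).trace = if x = 0 then (d : ℂ) ^ n else 0 := by
  classical
  by_cases hx : x.2 = 0
  · have := sum_char (M := Fin n → ZMod d)
      ({ toFun := fun J => dotp x.1 J, map_zero' := dotp_zero_right _,
         map_add' := fun a b => dotp_add_right a b _ } : (Fin n → ZMod d) →+ ZMod d)
    simp only [AddMonoidHom.coe_mk, ZeroHom.coe_mk] at this
    simp only [Matrix.trace, Matrix.diag, W_apply, hx, add_zero, if_true]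
    rw [this]
    have h2 : (∀ m, dotp x.1 m = 0) ↔ x = 0 := by
      constructor
      · intro h
        ext i
        · simpa [dotp_single_right] using h (Pi.single i 1)
        · simp [hx]
      · rintro rfl m
        exact dotp_zero_left m
    simp [h2]
  · rw [if_neg (by rintro rfl; exact hx rfl)]
    simp [Matrix.trace, W_apply, hx]

lemma W_ne_zero (x : Ph d n) : W x ≠ 0 := by
  intro h
  have h2 := W_mul x (-x)
  rw [h, zero_mul, add_neg_cancel, W_zero] at h2
  exact (smul_ne_zero (e_ne _) one_ne_zero) h2.symm


lemma W_label {x y : Ph d n} {a b : ℂ} (ha : a ≠ 0) (h : a • W x = b • W y) : x = y := by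
  have h2 : (a • W x * W (-x)).trace = (b • W y * W (-x)).trace := by rw [h]
  simp only [Matrix.smul_mul, W_mul, Matrix.trace_smul, trace_W, add_neg_cancel, if_true] at h2
  by_contra hne
  rw [if_neg (by intro h; exact hne (add_neg_eq_zero.1 h).symm)] at h2
  have hd0 : (d : ℂ) ≠ 0 := by exact_mod_cast NeZero.ne d
  simp only [smul_eq_mul, mul_zero] at h2
  exact mul_ne_zero ha (mul_ne_zero (e_ne _) (pow_ne_zero _ hd0)) h2

lemma mem_pauli {g : Mt d n} : g ∈ PauliSet d n ↔ ∃ (k : ZMod d) (x : Ph d n), g = e k • W x := by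
  simp only [PauliSet, Set.mem_ofPred_eq, q_pow, W, Prod.exists]

lemma mulp (k l : ZMod d) (x y : Ph d n) :
    (e k • W x) * (e l • W y) = e (k + l - dotp y.1 x.2) • W (x + y) := by
  rw [Matrix.smul_mul, Matrix.mul_smul, W_mul, smul_smul, smul_smul, ← e_add, ← e_add]
  congr 2
  ring

lemma commp (k l : ZMod d) (x y : Ph d n) :
    (e k • W x) * (e l • W y) = e (om x y) • ((e l • W y) * (e k • W x)) := by
  rw [mulp, mulp, smul_smul, ← e_add, add_comm y x]
  congr 2
  simp only [om]
  ring

lemma commp_iff (k l : ZMod d) (x y : Ph d n) :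
    (e k • W x) * (e l • W y) = ((e l • W y) * (e k • W x)) ↔ om x y = 0 := by
  rw [commp]
  constructor
  · intro h
    have h3 : (e l • W y) * (e k • W x) ≠ 0 := by
      rw [mulp]
      exact smul_ne_zero (e_ne _) (W_ne_zero _)
    apply e_eq_one
    have h4 : (e (om x y) - 1) • ((e l • W y) * (e k • W x)) = 0 := by
      rw [sub_smul, h, one_smul, sub_self]
    rcases smul_eq_zero.1 h4 with h5 | h5
    · exact sub_eq_zero.1 h5
    · exact absurd h5 h3
  · intro h
    rw [h, e_zero, one_smul]

structure IsStab (S : Set (Mt d n)) : Prop where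
  sub : S ⊆ PauliSet d n
  one : (1 : Mt d n) ∈ S
  mul : ∀ a ∈ S, ∀ b ∈ S, a * b ∈ S
  inv : ∀ a ∈ S, ∃ b ∈ S, a * b = 1
  comm : ∀ a ∈ S, ∀ b ∈ S, a * b = b * a
  scal : ∀ c : ℂ, c • (1 : Mt d n) ∈ S → c • (1 : Mt d n) = 1

def lab {S : Set (Mt d n)} (hS : IsStab S) : Submodule (ZMod d) (Ph d n) :=
  AddSubgroup.toZModSubmodule d
    { carrier := {x | ∃ k : ZMod d, e k • W x ∈ S}
      zero_mem' := ⟨0, by rw [e_zero, one_smul, W_zero]; exact hS.one⟩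
      add_mem' := by
        rintro x y ⟨k, hk⟩ ⟨l, hl⟩
        exact ⟨_, by rw [← mulp]; exact hS.mul _ hk _ hl⟩
      neg_mem' := by
        rintro x ⟨k, hk⟩
        obtain ⟨b, hb, hab⟩ := hS.inv _ hk
        obtain ⟨l, y, rfl⟩ := mem_pauli.1 (hS.sub hb)
        rw [mulp, ← W_zero, ← one_smul ℂ (W 0)] at hab
        have := W_label (e_ne _) hab
        rw [neg_eq_of_add_eq_zero_right this]
        exact ⟨l, hb⟩ }

lemma mem_lab {S : Set (Mt d n)} (hS : IsStab S) {x : Ph d n} :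
    x ∈ lab hS ↔ ∃ k : ZMod d, e k • W x ∈ S := Iff.rfl

lemma smul_one_inj {c : ℂ} (h : c • (1 : Mt d n) = 1) : c = 1 := by
  have := congrFun (congrFun h 0) 0
  simpa using this

lemma phase_unique {S : Set (Mt d n)} (hS : IsStab S) {x : Ph d n} {k l : ZMod d}
    (hk : e k • W x ∈ S) (hl : e l • W x ∈ S) : k = l := by
  obtain ⟨b, hb, hab⟩ := hS.inv _ hl
  have h1 : e k • W x = e (k - l) • (e l • W x) := by
    rw [smul_smul, ← e_add, sub_add_cancel]
  have h2 := hS.mul _ hk _ hb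
  rw [h1, Matrix.smul_mul, hab] at h2
  exact sub_eq_zero.1 (e_eq_one (smul_one_inj (hS.scal _ h2)))

lemma card_lab {S : Set (Mt d n)} (hS : IsStab S) : Nat.card (lab hS) = Nat.card S := by
  have h : ∀ x : lab hS, ∃ k : ZMod d, e k • W (x : Ph d n) ∈ S := fun x => x.2
  choose f hf using h
  refine Nat.card_congr (Equiv.ofBijective (fun x => (⟨_, hf x⟩ : S)) ⟨?_, ?_⟩)
  · intro x y hxy
    exact Subtype.ext (W_label (e_ne _) (Subtype.ext_iff.1 hxy))
  · rintro ⟨s, hs⟩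
    obtain ⟨k, x, rfl⟩ := mem_pauli.1 (hS.sub hs)
    refine ⟨⟨x, k, hs⟩, ?_⟩
    have := phase_unique hS (hf ⟨x, k, hs⟩) hs
    simp [this]

lemma lab_iso {S : Set (Mt d n)} (hS : IsStab S) {x y : Ph d n} (hx : x ∈ lab hS)
    (hy : y ∈ lab hS) : om x y = 0 := by
  obtain ⟨k, hk⟩ := hx
  obtain ⟨l, hl⟩ := hy
  exact (commp_iff k l x y).1 (hS.comm _ hk _ hl)

lemma finite_stab {S : Set (Mt d n)} (hS : IsStab S) : S.Finite := by
  apply Set.Finite.subset (Set.finite_range fun p : ZMod d × Ph d n => e p.1 • W p.2)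
  intro s hs
  obtain ⟨k, x, rfl⟩ := mem_pauli.1 (hS.sub hs)
  exact ⟨(k, x), rfl⟩

lemma fix_card {S : Set (Mt d n)} (hS : IsStab S) :
    Nat.card S * Module.finrank ℂ (FixSubspace d n S) = d ^ n := by
  classical
  have : Fintype S := (finite_stab hS).fintype
  have : Nonempty S := ⟨⟨1, hS.one⟩⟩
  set P : Mt d n := ∑ s : S, (s : Mt d n) with hP
  have hc : (Fintype.card S : ℂ) ≠ 0 := by exact_mod_cast Fintype.card_ne_zero
  have htr : P.trace = (d : ℂ) ^ n := by
    rw [hP, Matrix.trace_sum, Finset.sum_eq_single (⟨1, hS.one⟩ : S)]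
    · change (1 : Mt d n).trace = _
      rw [← W_zero, trace_W, if_pos rfl]
    · rintro ⟨s, hs⟩ _ hne
      obtain ⟨k, x, rfl⟩ := mem_pauli.1 (hS.sub hs)
      rw [Matrix.trace_smul, trace_W, if_neg, smul_zero]
      rintro rfl
      apply hne
      rw [Subtype.mk.injEq]
      rw [W_zero] at hs ⊢
      exact hS.scal _ hs
    · simp
  have hmul : ∀ s ∈ S, s * P = P := by
    intro s hs
    obtain ⟨b, hb, hab⟩ := hS.inv s hs
    have hba : b * s = 1 := by rw [hS.comm b hb s hs, hab]
    rw [hP, Finset.mul_sum]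
    refine Fintype.sum_bijective (fun t : S => (⟨s * t, hS.mul _ hs _ t.2⟩ : S)) ⟨?_, ?_⟩ _ _
      (fun t => rfl)
    · intro t t' h
      have h := Subtype.ext_iff.1 h
      simp only at h
      have h' : b * (s * (t : Mt d n)) = b * (s * (t' : Mt d n)) := by rw [h]
      rw [← mul_assoc, ← mul_assoc, hba, one_mul, one_mul] at h'
      exact Subtype.ext h'
    · intro t
      refine ⟨⟨b * t, hS.mul _ hb _ t.2⟩, Subtype.ext ?_⟩
      simp only
      rw [← mul_assoc, hab, one_mul]
  have hproj : LinearMap.IsProj (FixSubspace d n S)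
      (Matrix.toLin' ((Fintype.card S : ℂ)⁻¹ • P)) := by
    constructor
    · intro v s hs
      rw [Matrix.toLin'_apply, Matrix.mulVec_mulVec, Matrix.mul_smul, hmul s hs]
    · intro v hv
      rw [Matrix.toLin'_apply, Matrix.smul_mulVec, hP, Matrix.sum_mulVec,
        Finset.sum_congr rfl (fun (s : S) _ => hv s s.2), Finset.sum_const, Finset.card_univ,
        ← Nat.cast_smul_eq_nsmul ℂ, smul_smul, inv_mul_cancel₀ hc, one_smul]
  have h := hproj.trace
  rw [Matrix.trace_toLin'_eq, Matrix.trace_smul, htr, smul_eq_mul] at h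
  have h2 : (Fintype.card S : ℂ) * Module.finrank ℂ (FixSubspace d n S) = (d : ℂ) ^ n := by
    rw [← h, mul_inv_cancel_left₀ hc]
  rw [Nat.card_eq_fintype_card]
  exact_mod_cast h2

lemma card_sup_inf (A B : Submodule (ZMod d) (Ph d n)) :
    Nat.card A * Nat.card B =
      Nat.card (A ⊔ B : Submodule (ZMod d) (Ph d n)) *
        Nat.card (A ⊓ B : Submodule (ZMod d) (Ph d n)) := by
  have h1 := AddSubgroup.relIndex_sup_right A.toAddSubgroup B.toAddSubgroup
  have h2 := AddSubgroup.card_mul_index (B.toAddSubgroup.addSubgroupOf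
    (A.toAddSubgroup ⊔ B.toAddSubgroup))
  have h3 := AddSubgroup.card_mul_index (B.toAddSubgroup.addSubgroupOf A.toAddSubgroup)
  have h4 : Nat.card (B.toAddSubgroup.addSubgroupOf (A.toAddSubgroup ⊔ B.toAddSubgroup)) =
      Nat.card B :=
    Nat.card_congr (AddSubgroup.addSubgroupOfEquivOfLe le_sup_right).toEquiv
  have h5 : Nat.card (B.toAddSubgroup.addSubgroupOf A.toAddSubgroup) =
      Nat.card (A ⊓ B : Submodule (ZMod d) (Ph d n)) := by
    rw [← AddSubgroup.inf_addSubgroupOf_right, inf_comm]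
    exact Nat.card_congr (AddSubgroup.addSubgroupOfEquivOfLe inf_le_left).toEquiv
  have h6 : Nat.card (A.toAddSubgroup ⊔ B.toAddSubgroup : AddSubgroup (Ph d n)) =
      Nat.card (A ⊔ B : Submodule (ZMod d) (Ph d n)) := by
    rw [← Submodule.sup_toAddSubgroup]
    rfl
  rw [h4, h6] at h2
  rw [h5] at h3
  change _ * B.toAddSubgroup.relIndex _ = _ at h2 h3
  rw [h1] at h2
  rw [← h2]
  change _ = Nat.card A at h3
  rw [← h3]
  ring

def perpSub (x : Ph d n) : Submodule (ZMod d) (Ph d n) :=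
  AddSubgroup.toZModSubmodule d (omL x).ker

lemma mem_perpSub {x y : Ph d n} : y ∈ perpSub x ↔ om x y = 0 := Iff.rfl

lemma om_eq_zero_comm {x y : Ph d n} : om x y = 0 ↔ om y x = 0 := by
  rw [om_swap, neg_eq_zero]

lemma lab_perp {S : Set (Mt d n)} (hS : IsStab S) (hc : Nat.card S = d ^ n) {x : Ph d n}
    (hx : ∀ m ∈ lab hS, om m x = 0) : x ∈ lab hS := by
  have h := perp_card (lab hS)
  have hd0 : 0 < d ^ n := pow_pos (Nat.pos_of_ne_zero (NeZero.ne d)) n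
  rw [card_lab hS, hc, two_mul, pow_add] at h
  have h2 := Nat.eq_of_mul_eq_mul_left hd0 h
  have hsub : (lab hS : Set (Ph d n)) ⊆ {x : Ph d n | ∀ m ∈ lab hS, om m x = 0} :=
    fun y hy m hm => lab_iso hS hm hy
  have h3 := Set.eq_of_subset_of_ncard_le hsub (by
    rw [← Nat.card_coe_set_eq, ← Nat.card_coe_set_eq, h2]
    exact (hc.symm.trans (card_lab hS).symm).le)
  have : x ∈ (lab hS : Set (Ph d n)) := by rw [h3]; exact hx
  exact this

lemma commp_vec (k l : ZMod d) (x y : Ph d n) (v : (Fin n → ZMod d) → ℂ)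
    (h1 : (e k • W x).mulVec v = v) (h2 : (e k • W x).mulVec ((e l • W y).mulVec v) =
      (e l • W y).mulVec v) (hne : (e l • W y).mulVec v ≠ 0) : om x y = 0 := by
  rw [Matrix.mulVec_mulVec, commp, Matrix.smul_mulVec, ← Matrix.mulVec_mulVec, h1] at h2
  apply e_eq_one
  have h4 : (e (om x y) - 1) • ((e l • W y).mulVec v) = 0 := by
    rw [sub_smul, h2, one_smul, sub_self]
  rcases smul_eq_zero.1 h4 with h5 | h5
  · exact sub_eq_zero.1 h5
  · exact absurd h5 hne

end CWSproof
end CWSproof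

theorem cws_is_stabilizer_iff (d n K : ℕ) [NeZero d] (hd : 2 ≤ d) (hn : 1 ≤ n)
    (Rmap : Matrix (Fin n → ZMod d) (Fin n → ZMod d) ℂ →
      (Fin n → ZMod d) × (Fin n → ZMod d))
    (hR : ∀ (k : ZMod d) (U V : Fin n → ZMod d),
      Rmap (q d ^ k.val • PauliWord d n U V) = (U, V))
    (S : Set (Matrix (Fin n → ZMod d) (Fin n → ZMod d) ℂ))
    (hSsub : S ⊆ PauliSet d n)
    (hS1 : (1 : Matrix (Fin n → ZMod d) (Fin n → ZMod d) ℂ) ∈ S)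
    (hSmul : ∀ a ∈ S, ∀ b ∈ S, a * b ∈ S)
    (hSinv : ∀ a ∈ S, ∃ b ∈ S, a * b = 1)
    (hScomm : ∀ a ∈ S, ∀ b ∈ S, a * b = b * a)
    (hSscal : ∀ c : ℂ, c • (1 : Matrix (Fin n → ZMod d) (Fin n → ZMod d) ℂ) ∈ S →
      c • (1 : Matrix (Fin n → ZMod d) (Fin n → ZMod d) ℂ) = 1)
    (hcard : Nat.card S = d ^ n)
    (ψ : (Fin n → ZMod d) → ℂ) (hψS : ψ ∈ FixSubspace d n S) (hψ : ψ ≠ 0)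
    (hK : 0 < K)
    (w : Fin K → Matrix (Fin n → ZMod d) (Fin n → ZMod d) ℂ)
    (hw : ∀ i, w i ∈ PauliSet d n)
    (hw1 : w ⟨0, hK⟩ = 1)
    (hli : LinearIndependent ℂ (fun i => (w i).mulVec ψ)) :
    (∃ H : Set (Matrix (Fin n → ZMod d) (Fin n → ZMod d) ℂ),
        H ⊆ PauliSet d n ∧
        (1 : Matrix (Fin n → ZMod d) (Fin n → ZMod d) ℂ) ∈ H ∧
        (∀ a ∈ H, ∀ b ∈ H, a * b ∈ H) ∧
        (∀ a ∈ H, ∃ b ∈ H, a * b = 1) ∧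
        (∀ a ∈ H, ∀ b ∈ H, a * b = b * a) ∧
        (∀ c : ℂ, c • (1 : Matrix (Fin n → ZMod d) (Fin n → ZMod d) ℂ) ∈ H →
          c • (1 : Matrix (Fin n → ZMod d) (Fin n → ZMod d) ℂ) = 1) ∧
        FixSubspace d n H = Submodule.span ℂ (Set.range fun i => (w i).mulVec ψ)) ↔
      Nat.card (Submodule.span (ZMod d) (Set.range fun i => Rmap (w i))) =
        K * Nat.card
          (((Submodule.span (ZMod d) (Set.range fun i => Rmap (w i)) :
              Set ((Fin n → ZMod d) × (Fin n → ZMod d)))) ∩ (Rmap '' S) :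
            Set ((Fin n → ZMod d) × (Fin n → ZMod d))) := by
  classical
  have hS : CWSproof.IsStab S := ⟨hSsub, hS1, hSmul, hSinv, hScomm, hSscal⟩
  have hd0 : 0 < d ^ n := pow_pos (by omega) n
  have hR' : ∀ (k : ZMod d) (x : CWSproof.Ph d n), Rmap (CWSproof.e k • CWSproof.W x) = x := by
    intro k x
    rw [← CWSproof.q_pow]
    exact hR k x.1 x.2
  have hwform : ∀ i, ∃ k : ZMod d, w i = CWSproof.e k • CWSproof.W (Rmap (w i)) := by
    intro i
    obtain ⟨k, x, hx⟩ := CWSproof.mem_pauli.1 (hw i)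
    exact ⟨k, by rw [hx, hR']⟩
  choose p hp using hwform
  set A := Submodule.span (ZMod d) (Set.range fun i => Rmap (w i)) with hA
  have hAmem : ∀ i, Rmap (w i) ∈ A := fun i => Submodule.subset_span ⟨i, rfl⟩
  set B := CWSproof.lab hS with hB
  have hBS : Rmap '' S = (B : Set (CWSproof.Ph d n)) := by
    ext x
    constructor
    · rintro ⟨s, hs, rfl⟩
      obtain ⟨k, x, rfl⟩ := CWSproof.mem_pauli.1 (hSsub hs)
      rw [hR']
      exact ⟨k, hs⟩
    · rintro ⟨k, hk⟩
      exact ⟨_, hk, hR' k x⟩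
  have hBcard : Nat.card B = d ^ n := (CWSproof.card_lab hS).trans hcard
  have hAB : Nat.card ((A : Set (CWSproof.Ph d n)) ∩ Rmap '' S : Set (CWSproof.Ph d n)) =
      Nat.card (A ⊓ B : Submodule (ZMod d) (CWSproof.Ph d n)) := by
    rw [hBS]
    rfl
  rw [hAB]
  have hsi := CWSproof.card_sup_inf A B
  have hpc := CWSproof.perp_card (A ⊔ B)
  have hABpos : 0 < Nat.card (A ⊓ B : Submodule (ZMod d) (CWSproof.Ph d n)) := Nat.card_pos
  have hQ : Module.finrank ℂ (Submodule.span ℂ (Set.range fun i => (w i).mulVec ψ)) = K := by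
    rw [finrank_span_eq_card hli, Fintype.card_fin]
  rw [hBcard] at hsi
  constructor
  · rintro ⟨H, h1, h2, h3, h4, h5, h6, hfix⟩
    have hH : CWSproof.IsStab H := ⟨h1, h2, h3, h4, h5, h6⟩
    have hHc := CWSproof.fix_card hH
    rw [hfix, hQ] at hHc
    have hfw : ∀ i, ∀ h ∈ H, h.mulVec ((w i).mulVec ψ) = (w i).mulVec ψ := by
      intro i
      have : (w i).mulVec ψ ∈ FixSubspace d n H := by
        rw [hfix]
        exact Submodule.subset_span ⟨i, rfl⟩
      exact this
    have hf1 : ∀ h ∈ H, h.mulVec ψ = ψ := by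
      intro h hh
      have := hfw ⟨0, hK⟩ h hh
      rwa [hw1, Matrix.one_mulVec] at this
    have hsub : (CWSproof.lab hH : Set (CWSproof.Ph d n)) ⊆
        {x | ∀ m ∈ A ⊔ B, CWSproof.om m x = 0} := by
      rintro x ⟨k, hk⟩ m hm
      rw [CWSproof.om_eq_zero_comm, ← CWSproof.mem_perpSub]
      refine (sup_le ?_ ?_ : A ⊔ B ≤ CWSproof.perpSub x) hm
      · rw [hA, Submodule.span_le]
        rintro _ ⟨i, rfl⟩
        have hi := hfw i _ hk
        have hne := hli.ne_zero i
        change (w i).mulVec ψ ≠ 0 at hne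
        rw [hp i] at hi hne
        exact CWSproof.commp_vec k (p i) x _ ψ (hf1 _ hk) hi hne
      · rintro y ⟨l, hl⟩
        have hl' := hψS _ hl
        refine CWSproof.commp_vec k l x y ψ (hf1 _ hk) ?_ ?_
        · rw [hl']
          exact hf1 _ hk
        · rw [hl']
          exact hψ
    have hle : Nat.card H ≤ Nat.card {x | ∀ m ∈ A ⊔ B, CWSproof.om m x = 0} := by
      rw [← CWSproof.card_lab hH]
      exact Nat.card_mono (Set.toFinite _) hsub
    have hHpos : 0 < Nat.card H := by
      rcases Nat.eq_zero_or_pos (Nat.card H) with h | h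
      · rw [h] at hHc
        omega
      · exact h
    have hle2 : Nat.card (A ⊔ B : Submodule (ZMod d) (CWSproof.Ph d n)) ≤ K * d ^ n := by
      refine Nat.le_of_mul_le_mul_left ?_ hHpos
      calc Nat.card H * Nat.card (A ⊔ B : Submodule (ZMod d) (CWSproof.Ph d n))
          ≤ Nat.card {x | ∀ m ∈ A ⊔ B, CWSproof.om m x = 0} *
            Nat.card (A ⊔ B : Submodule (ZMod d) (CWSproof.Ph d n)) := Nat.mul_le_mul_right _ hle
        _ = d ^ n * d ^ n := by rw [mul_comm, hpc, two_mul, pow_add]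
        _ = Nat.card H * (K * d ^ n) := by rw [← mul_assoc, hHc]
    apply le_antisymm
    · refine Nat.le_of_mul_le_mul_right ?_ hd0
      rw [hsi]
      calc _ ≤ K * d ^ n * _ := Nat.mul_le_mul_right _ hle2
        _ = _ := by ring
    · have hinj : Function.Injective
          (fun t : Fin K × (A ⊓ B : Submodule (ZMod d) (CWSproof.Ph d n)) =>
            (⟨Rmap (w t.1) + t.2, A.add_mem (hAmem _) t.2.2.1⟩ : A)) := by
        rintro ⟨i, b, hb⟩ ⟨j, b', hb'⟩ h
        have h : Rmap (w i) + b = Rmap (w j) + b' := Subtype.ext_iff.1 h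
        have hij : i = j := by
          have hmem : Rmap (w j) - Rmap (w i) ∈ B := by
            have : Rmap (w j) - Rmap (w i) = b - b' := by
              rw [sub_eq_sub_iff_add_eq_add, ← h, add_comm]
            rw [this]
            exact B.sub_mem hb.2 hb'.2
          obtain ⟨l, hl⟩ := hmem
          have hl' := hψS _ hl
          have hm := CWSproof.mulp (p i) l (Rmap (w i)) (Rmap (w j) - Rmap (w i))
          rw [← hp i, add_sub_cancel] at hm
          have hv := congrArg (fun M => M.mulVec ψ) hm
          rw [← Matrix.mulVec_mulVec, hl', Matrix.smul_mulVec] at hv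
          have hv2 := congrArg (fun u => CWSproof.e (p j) • u) hv
          rw [smul_comm (CWSproof.e (p j)), ← Matrix.smul_mulVec (CWSproof.e (p j)) (CWSproof.W (Rmap (w j))), ← hp j] at hv2
          exact hli.eq_of_smul_apply_eq_smul_apply _ _ i j (CWSproof.e_ne _) hv2
        subst hij
        simpa using h
      have := Nat.card_le_card_of_injective _ hinj
      rwa [Nat.card_prod, Nat.card_fin] at this
  · intro hcd
    have hABc : Nat.card (A ⊔ B : Submodule (ZMod d) (CWSproof.Ph d n)) = K * d ^ n := by
      refine Nat.eq_of_mul_eq_mul_right hABpos ?_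
      rw [← hsi, hcd]
      ring
    have hperp : K * Nat.card {x | ∀ m ∈ A ⊔ B, CWSproof.om m x = 0} = d ^ n := by
      refine Nat.eq_of_mul_eq_mul_right hd0 ?_
      rw [hABc, two_mul, pow_add] at hpc
      rw [← hpc]
      ring
    have hH : CWSproof.IsStab {s ∈ S | ∀ i, s * w i = w i * s} := by
      refine ⟨fun s hs => hSsub hs.1, ⟨hS1, by simp⟩, ?_, ?_, ?_, fun c hc => hSscal c hc.1⟩
      · rintro a ⟨ha, ha'⟩ b ⟨hb, hb'⟩
        refine ⟨hSmul a ha b hb, fun i => ?_⟩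
        rw [mul_assoc, hb', ← mul_assoc, ha', mul_assoc]
      · rintro a ⟨ha, ha'⟩
        obtain ⟨b, hb, hab⟩ := hSinv a ha
        have hba : b * a = 1 := by rw [hScomm b hb a ha, hab]
        refine ⟨b, ⟨hb, fun i => ?_⟩, hab⟩
        calc b * w i = b * (w i * a) * b := by rw [mul_assoc, mul_assoc, hab, mul_one]
          _ = w i * b := by rw [← ha', ← mul_assoc, hba, one_mul]
      · rintro a ⟨ha, _⟩ b ⟨hb, _⟩
        exact hScomm a ha b hb
    refine ⟨_, hH.sub, hH.one, hH.mul, hH.inv, hH.comm, hH.scal, ?_⟩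
    have hHc := CWSproof.fix_card hH
    symm
    apply Submodule.eq_of_le_of_finrank_le
    · rw [Submodule.span_le]
      rintro _ ⟨i, rfl⟩ s ⟨hs, hsw⟩
      rw [Matrix.mulVec_mulVec, hsw, ← Matrix.mulVec_mulVec, hψS s hs]
    · rw [hQ]
      have hsub : {x | ∀ m ∈ A ⊔ B, CWSproof.om m x = 0} ⊆
          (CWSproof.lab hH : Set (CWSproof.Ph d n)) := by
        intro x hx
        have hxB : x ∈ B := CWSproof.lab_perp hS hcard
          fun m hm => hx m (le_sup_right (a := A) hm)
        obtain ⟨k, hk⟩ := hxB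
        refine ⟨k, hk, fun i => ?_⟩
        rw [hp i, CWSproof.commp_iff, CWSproof.om_eq_zero_comm]
        exact hx _ (le_sup_left (b := B) (hAmem i))
      have hle := Nat.card_mono (Set.toFinite _) hsub
      change _ ≤ Nat.card (CWSproof.lab hH) at hle
      rw [CWSproof.card_lab hH] at hle
      have hpos : 0 < Nat.card {x | ∀ m ∈ A ⊔ B, CWSproof.om m x = 0} := by
        rcases Nat.eq_zero_or_pos (Nat.card {x | ∀ m ∈ A ⊔ B, CWSproof.om m x = 0}) with h | h
        · rw [h] at hperp
          omega
        · exact h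
      refine Nat.le_of_mul_le_mul_left ?_ hpos
      calc _ ≤ _ := Nat.mul_le_mul_right _ hle
        _ = _ := by rw [hHc, ← hperp, mul_comm]
end
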